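/- Let n ≥ 2 be an integer and a ∈ ℝ. There exists a function f : ℝ → ℝ which is continuously differentiable on [0, +∞) and twice differentiable at every s > 0, with f(0) = a and f'(0) = 0, such that f'(s) ∈ (−1, 1) for every s ≥ 0, and f''(s) = (1 − f'(s)²)·(1 − (n−1)·f'(s)/s) for every s > 0. -/

import Mathlib

open Set Filter Topology

/-- `tanh` has derivative `1 - tanh ^ 2`. -/
lemma aux_hasDerivAt_tanh (x : ℝ) : HasDerivAt Real.tanh (1 - Real.tanh x ^ 2) x := by
  have h := (Real.hasDerivAt_sinh x).div (Real.hasDerivAt_cosh x) (Real.cosh_pos x).ne'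
  have e : Real.sinh / Real.cosh = Real.tanh := by
    funext y
    simp [Real.tanh_eq_sinh_div_cosh]
  rw [e] at h
  refine h.congr_deriv ?_
  rw [Real.tanh_eq_sinh_div_cosh]
  have := (Real.cosh_pos x).ne'
  field_simp

lemma aux_tanh_mem (x : ℝ) : Real.tanh x ∈ Ioo (-1 : ℝ) 1 := by
  have hc := Real.cosh_pos x
  rw [Real.tanh_eq_sinh_div_cosh]
  have h1 := Real.cosh_sq x
  constructor
  · rw [lt_div_iff₀ hc]; nlinarith
  · rw [div_lt_iff₀ hc]; nlinarith

lemma aux_psi_lip (x y : ℝ) :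
    |(x - Real.tanh x) - (y - Real.tanh y)| ≤ |x - y| := by
  have hd : ∀ z ∈ (univ : Set ℝ), HasDerivWithinAt (fun x => x - Real.tanh x)
      (1 - (1 - Real.tanh z ^ 2)) univ z := fun z _ =>
    ((hasDerivAt_id z).sub (aux_hasDerivAt_tanh z)).hasDerivWithinAt
  have hb : ∀ z ∈ (univ : Set ℝ), ‖(1 - (1 - Real.tanh z ^ 2))‖ ≤ 1 := by
    intro z _
    obtain ⟨h1, h2⟩ := aux_tanh_mem z
    rw [Real.norm_eq_abs, abs_le]
    constructor <;> nlinarith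
  have := convex_univ.norm_image_sub_le_of_norm_hasDerivWithin_le hd hb (mem_univ y) (mem_univ x)
  simpa using this

/-- `tanh x / x`, extended continuously. -/
noncomputable def auxK (x : ℝ) : ℝ := dslope Real.tanh 0 x

lemma auxK_continuous : Continuous auxK := by
  rw [continuous_iff_continuousAt]
  intro x
  by_cases hx : x = 0
  · subst hx
    exact continuousAt_dslope_same.2 (aux_hasDerivAt_tanh 0).differentiableAt
  · exact (continuousAt_dslope_of_ne hx).2 (aux_hasDerivAt_tanh x).continuousAt

lemma auxK_mul (x : ℝ) : x * auxK x = Real.tanh x := by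
  have := sub_smul_dslope Real.tanh 0 x
  simpa [auxK] using this

lemma auxK_zero : auxK 0 = 1 := by
  simp [auxK, dslope_same, (aux_hasDerivAt_tanh 0).deriv]

noncomputable def auxH (t w : ℝ) : ℝ := w - w * auxK (t * w)

lemma auxH_lip (t v w : ℝ) : |auxH t v - auxH t w| ≤ |v - w| := by
  by_cases ht : t = 0
  · subst ht
    simp [auxH, auxK_zero]
  · have h := aux_psi_lip (t * v) (t * w)
    rw [← auxK_mul, ← auxK_mul] at h
    have e1 : (t * v - t * v * auxK (t * v)) - (t * w - t * w * auxK (t * w))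
      = t * (auxH t v - auxH t w) := by unfold auxH; ring
    rw [e1, ← mul_sub, abs_mul, abs_mul] at h
    exact le_of_mul_le_mul_left h (abs_pos.2 ht)

lemma auxH_bound (t v : ℝ) : |auxH t v| ≤ |v| := by
  have := auxH_lip t v 0
  simpa [auxH] using this

lemma auxH_cont (w : ℝ → ℝ) (hw : Continuous w) : Continuous fun t => auxH t (w t) := by
  unfold auxH
  exact hw.sub (hw.mul (auxK_continuous.comp (continuous_id.mul hw)))

/-- The integrand. -/
noncomputable def auxQ (m : ℕ) (w : ℝ → ℝ) (t : ℝ) : ℝ := 1 + m * auxH t (w t)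

lemma auxQ_cont (m : ℕ) (w : ℝ → ℝ) (hw : Continuous w) : Continuous (auxQ m w) := by
  unfold auxQ
  exact continuous_const.add (continuous_const.mul (auxH_cont w hw))

noncomputable def auxT0 (m : ℕ) (w : ℝ → ℝ) (s : ℝ) : ℝ := ∫ r in (0:ℝ)..1, r ^ m * auxQ m w (s * r)

lemma auxT0_cont (m : ℕ) (w : ℝ → ℝ) (hw : Continuous w) : Continuous (auxT0 m w) := by
  unfold auxT0
  apply intervalIntegral.continuous_parametric_intervalIntegral_of_continuous'
  have := auxQ_cont m w hw
  unfold Function.uncurry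
  fun_prop

open BoundedContinuousFunction in
lemma auxT0_bound (m : ℕ) (w : ℝ →ᵇ ℝ) (s : ℝ) : ‖auxT0 m w s‖ ≤ 1 + m * ‖w‖ := by
  have := intervalIntegral.norm_integral_le_of_norm_le_const (a := (0:ℝ)) (b := 1)
    (f := fun r => r ^ m * auxQ m w (s * r)) (C := 1 + m * ‖w‖) ?_
  · simpa [auxT0] using this
  · intro r hr
    rw [uIoc_of_le zero_le_one] at hr
    have h1 : r ^ m ≤ 1 := pow_le_one₀ hr.1.le hr.2
    have h0 : 0 ≤ r ^ m := pow_nonneg hr.1.le _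
    have h2 : |auxQ m w (s * r)| ≤ 1 + m * ‖w‖ := by
      unfold auxQ
      refine (abs_add_le _ _).trans ?_
      rw [abs_one, abs_mul, Nat.abs_cast]
      have := (auxH_bound (s * r) (w (s * r))).trans (w.norm_coe_le_norm (s * r))
      gcongr
    rw [norm_mul, Real.norm_eq_abs, Real.norm_eq_abs, abs_of_nonneg h0]
    calc _ ≤ 1 * |auxQ m w (s * r)| := by gcongr
      _ ≤ _ := by rwa [one_mul]

open BoundedContinuousFunction in
lemma auxT0_lip (m : ℕ) (v w : ℝ →ᵇ ℝ) (s : ℝ) :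
    dist (auxT0 m v s) (auxT0 m w s) ≤ (m / (m + 1)) * dist v w := by
  have hv := auxQ_cont m v v.continuous
  have hw := auxQ_cont m w w.continuous
  rw [Real.dist_eq, auxT0, auxT0, ← intervalIntegral.integral_sub
    (Continuous.intervalIntegrable (by fun_prop) _ _)
    (Continuous.intervalIntegrable (by fun_prop) _ _)]
  have key := intervalIntegral.norm_integral_le_of_norm_le (a := (0:ℝ)) (b := 1)
    (μ := MeasureTheory.volume)
    (f := fun r => r ^ m * auxQ m v (s * r) - r ^ m * auxQ m w (s * r))
    (g := fun r => r ^ m * (m * dist v w)) zero_le_one ?_ ?_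
  · rw [Real.norm_eq_abs] at key
    refine key.trans (le_of_eq ?_)
    rw [intervalIntegral.integral_mul_const, integral_pow]
    simp
    ring
  · refine Filter.Eventually.of_forall fun r hr => ?_
    have h0 : 0 ≤ r ^ m := pow_nonneg hr.1.le _
    rw [← mul_sub, norm_mul, Real.norm_eq_abs, Real.norm_eq_abs, abs_of_nonneg h0]
    have e : auxQ m v (s * r) - auxQ m w (s * r)
      = m * (auxH (s * r) (v (s * r)) - auxH (s * r) (w (s * r))) := by
      unfold auxQ; ring
    rw [e, abs_mul, Nat.abs_cast]
    have := (auxH_lip (s * r) (v (s * r)) (w (s * r))).trans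
      (v.dist_coe_le_dist (g := w) (s * r))
    gcongr
  · exact Continuous.intervalIntegrable (by fun_prop) _ _

open BoundedContinuousFunction in
lemma aux_exists_fixed (m : ℕ) : ∃ w : ℝ → ℝ, Continuous w ∧ ∀ s, auxT0 m w s = w s := by
  let T : (ℝ →ᵇ ℝ) → (ℝ →ᵇ ℝ) := fun w =>
    BoundedContinuousFunction.ofNormedAddCommGroup (auxT0 m w)
      (auxT0_cont m w w.continuous) (1 + m * ‖w‖) (auxT0_bound m w)
  have hT : ContractingWith ((m : NNReal) / (m + 1)) T := by
    constructor
    · rw [div_lt_one (by positivity)]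
      exact lt_add_one _
    · refine LipschitzWith.of_dist_le_mul fun v w => ?_
      rw [BoundedContinuousFunction.dist_le (by positivity)]
      intro s
      have := auxT0_lip m v w s
      simpa [T] using this
  refine ⟨hT.fixedPoint, (hT.fixedPoint).continuous, fun s => ?_⟩
  have := hT.fixedPoint_isFixedPt
  exact DFunLike.congr_fun this s

lemma aux_phi (m : ℕ) : ∃ w : ℝ → ℝ, Continuous w ∧ ∀ s, 0 < s →
    HasDerivAt (fun s => s * w s) (1 - m * Real.tanh (s * w s) / s) s := by
  obtain ⟨w, hw, hfix⟩ := aux_exists_fixed m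
  refine ⟨w, hw, fun s hs => ?_⟩
  have hG : Continuous fun t => t ^ m * auxQ m w t := by
    have := auxQ_cont m w hw
    fun_prop
  have hI : ∀ s : ℝ, s ^ (m + 1) * w s = ∫ t in (0:ℝ)..s, t ^ m * auxQ m w t := by
    intro s
    have h := intervalIntegral.mul_integral_comp_mul_left (a := 0) (b := 1)
      (f := fun t => t ^ m * auxQ m w t) (c := s)
    rw [mul_zero, mul_one] at h
    rw [← h, ← hfix s, auxT0, pow_succ', mul_assoc, ← intervalIntegral.integral_const_mul]
    congr 2
    funext r
    rw [mul_pow, mul_assoc]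
  have hD := intervalIntegral.integral_hasDerivAt_right (hG.intervalIntegrable 0 s)
    (hG.stronglyMeasurableAtFilter _ _) hG.continuousAt
  have hD2 := hD.div (hasDerivAt_pow m s) (pow_pos hs m).ne'
  have hev : (fun s => s * w s) =ᶠ[𝓝 s]
      (fun u => ∫ t in (0:ℝ)..u, t ^ m * auxQ m w t) / (fun x => x ^ m) := by
    filter_upwards [lt_mem_nhds hs] with u hu
    rw [Pi.div_apply, ← hI u, eq_div_iff (pow_pos hu m).ne']
    ring
  refine (hD2.congr_of_eventuallyEq hev).congr_deriv ?_
  rw [← hI s, ← auxK_mul, auxQ, auxH]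
  have hs' := hs.ne'
  rcases m with _ | k
  · simp
  · rw [Nat.add_sub_cancel]
    field_simp
    ring

/-- Existence of rotationally symmetric spacelike graphical translating solitons
in Minkowski space 𝕃^{n+1}. -/
theorem stmt_5 (n : ℕ) (hn : 2 ≤ n) (a : ℝ) :
    ∃ f : ℝ → ℝ,
      ContDiffOn ℝ 1 f (Set.Ici 0) ∧
      (∀ s : ℝ, 0 < s → DifferentiableAt ℝ (derivWithin f (Set.Ici 0)) s) ∧
      f 0 = a ∧ derivWithin f (Set.Ici 0) 0 = 0 ∧
      (∀ s ∈ Set.Ici (0 : ℝ), derivWithin f (Set.Ici 0) s ∈ Set.Ioo (-1 : ℝ) 1) ∧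
      ∀ s : ℝ, 0 < s →
        deriv (derivWithin f (Set.Ici 0)) s =
          (1 - (derivWithin f (Set.Ici 0) s) ^ 2) *
            (1 - ((n : ℝ) - 1) * derivWithin f (Set.Ici 0) s / s) := by
  obtain ⟨w, hw, hphi⟩ := aux_phi (n - 1)
  have hcast : ((n - 1 : ℕ) : ℝ) = (n : ℝ) - 1 := by
    rw [Nat.cast_sub (by omega)]; simp
  rw [hcast] at hphi
  let g : ℝ → ℝ := fun s => Real.tanh (s * w s)
  have hg : Continuous g := by
    have : Continuous Real.tanh :=
      continuous_iff_continuousAt.2 fun x => (aux_hasDerivAt_tanh x).continuousAt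
    exact this.comp (continuous_id.mul hw)
  let f : ℝ → ℝ := fun s => a + ∫ t in (0:ℝ)..s, g t
  have hf : ∀ s, HasDerivAt f (g s) s := fun s =>
    (intervalIntegral.integral_hasDerivAt_right (hg.intervalIntegrable 0 s)
      (hg.stronglyMeasurableAtFilter _ _) hg.continuousAt).const_add a
  have hfd : deriv f = g := funext fun s => (hf s).deriv
  have hdw : ∀ s ∈ Ici (0 : ℝ), derivWithin f (Ici 0) s = g s := fun s hs =>
    (hf s).hasDerivWithinAt.derivWithin (uniqueDiffOn_Ici 0 s hs)
  have hgd : ∀ s, 0 < s → HasDerivAt (derivWithin f (Ici 0))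
      ((1 - g s ^ 2) * (1 - ((n : ℝ) - 1) * g s / s)) s := by
    intro s hs
    have h := (aux_hasDerivAt_tanh (s * w s)).comp s (hphi s hs)
    refine h.congr_of_eventuallyEq ?_
    filter_upwards [lt_mem_nhds hs] with u hu
    exact hdw u hu.le
  refine ⟨f, ?_, fun s hs => (hgd s hs).differentiableAt, by simp [f], ?_, ?_, ?_⟩
  · refine ContDiff.contDiffOn (contDiff_one_iff_deriv.2 ⟨fun s => (hf s).differentiableAt, ?_⟩)
    rw [hfd]; exact hg
  · rw [hdw 0 self_mem_Ici]; simp [g]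
  · intro s hs
    rw [hdw s hs]; exact aux_tanh_mem _
  · intro s hs
    rw [(hgd s hs).deriv, hdw s hs.le]
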